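/- arXiv:2305.19766 — 4 statements merged into one kernel-verified Lean document; each statement's English description precedes it below -/
import Mathlib

section
/- Let (A_0, A_1) be a two-outcome POVM on ℂ^d and let U ∈ U(2d) be a unitary whose blocks satisfy U_{00}* U_{00} = A_0 and U_{10}* U_{10} = A_1. Then there exist unitary matrices V, W, Z ∈ U(d) such that U_{00} = V√A_0, U_{10} = W√A_1, U_{01} = V√A_1 Z*, and U_{11} = −W√A_0 Z*. -/
open scoped Kronecker
open Matrix
open scoped ComplexOrder
open scoped MatrixOrder

/-- The `(i,j)` block (of size `d × d`) of a matrix on `ℂ^d ⊗ ℂ^n`. -/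
def blk {d n : ℕ} (U : Matrix (Fin d × Fin n) (Fin d × Fin n) ℂ) (i j : Fin n) :
    Matrix (Fin d) (Fin d) ℂ :=
  Matrix.of fun a b => U (a, i) (b, j)

/-!
Write `U = [A, B; C, D]` and `|X| = √(X* X)`. By polar decomposition, `A = V|A|` and `C = W|C|`.
Unitarity gives `|A|² + |C|² = 1`, so `|A|` and `|C|` commute and
`diag(V, W) * [|A|, |C|; |C|, -|A|]` is a unitary with the same first block column as `U`. Two such
unitaries differ by a right factor `diag(1, Y)` with `Y` unitary, and `Z = Y*`.
-/

section BlockUnitary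

variable {m n R : Type*} [Fintype m] [Fintype n] [DecidableEq m] [DecidableEq n]
  [CommRing R] [StarRing R]

theorem submatrix_equiv_mem_unitaryGroup {U : Matrix n n R} (hU : U ∈ unitaryGroup n R)
    (e : m ≃ n) : U.submatrix e e ∈ unitaryGroup m R := by
  rw [mem_unitaryGroup_iff', star_eq_conjTranspose] at hU ⊢
  rw [conjTranspose_submatrix, submatrix_mul_equiv, hU, submatrix_one_equiv]

theorem fromBlocks_mem_unitaryGroup_iff {A : Matrix m m R} {B : Matrix m n R}
    {C : Matrix n m R} {D : Matrix n n R} :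
    fromBlocks A B C D ∈ unitaryGroup (m ⊕ n) R ↔
      Aᴴ * A + Cᴴ * C = 1 ∧ Aᴴ * B + Cᴴ * D = 0 ∧
        Bᴴ * A + Dᴴ * C = 0 ∧ Bᴴ * B + Dᴴ * D = 1 := by
  rw [mem_unitaryGroup_iff', star_eq_conjTranspose, fromBlocks_conjTranspose,
    fromBlocks_multiply, ← fromBlocks_one, fromBlocks_inj]

theorem fromBlocks_zero₁₂_zero₂₁_mem_unitaryGroup_iff {V : Matrix m m R} {W : Matrix n n R} :
    fromBlocks V 0 0 W ∈ unitaryGroup (m ⊕ n) R ↔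
      V ∈ unitaryGroup m R ∧ W ∈ unitaryGroup n R := by
  rw [fromBlocks_mem_unitaryGroup_iff, mem_unitaryGroup_iff', mem_unitaryGroup_iff']
  simp [star_eq_conjTranspose]

theorem fromBlocks_neg_mem_unitaryGroup_of_commute {S T : Matrix n n R} (hS : S.IsHermitian)
    (hT : T.IsHermitian) (hcomm : Commute S T) (hsq : S * S + T * T = 1) :
    fromBlocks S T T (-S) ∈ unitaryGroup (n ⊕ n) R := by
  have hsq' : T * T + S * S = 1 := by rw [add_comm, hsq]
  simp [fromBlocks_mem_unitaryGroup_iff, hS.eq, hT.eq, hcomm.eq, hsq, hsq']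

theorem exists_unitary_mul_right_of_left_blocks_eq {A : Matrix m m R} {B B' : Matrix m n R}
    {C : Matrix n m R} {D D' : Matrix n n R}
    (h : fromBlocks A B C D ∈ unitaryGroup (m ⊕ n) R)
    (h' : fromBlocks A B' C D' ∈ unitaryGroup (m ⊕ n) R) :
    ∃ Y ∈ unitaryGroup n R, B = B' * Y ∧ D = D' * Y := by
  set Y := B'ᴴ * B + D'ᴴ * D with hY
  obtain ⟨hAC, hACBD, -, -⟩ := fromBlocks_mem_unitaryGroup_iff.1 h
  obtain ⟨-, -, hBDAC, -⟩ := fromBlocks_mem_unitaryGroup_iff.1 h'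
  have hquot : star (fromBlocks A B' C D') * fromBlocks A B C D = fromBlocks 1 0 0 Y := by
    rw [star_eq_conjTranspose, fromBlocks_conjTranspose, fromBlocks_multiply, hAC, hACBD,
      hBDAC, hY]
  have hYmem : Y ∈ unitaryGroup n R :=
    (fromBlocks_zero₁₂_zero₂₁_mem_unitaryGroup_iff.1 <|
      hquot ▸ mul_mem (Unitary.star_mem h') h).2
  have hmul : fromBlocks A B C D = fromBlocks A B' C D' * fromBlocks 1 0 0 Y := by
    rw [← hquot, ← mul_assoc, mem_unitaryGroup_iff.1 h', one_mul]
  rw [fromBlocks_multiply, fromBlocks_inj] at hmul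
  exact ⟨Y, hYmem, by simpa using hmul.2.1, by simpa using hmul.2.2.2⟩

end BlockUnitary

section PolarDecomposition

variable {𝕜 : Type*} [RCLike 𝕜]

theorem exists_linearIsometryEquiv_of_norm_eq {E F : Type*} [AddCommGroup E] [Module 𝕜 E]
    [NormedAddCommGroup F] [InnerProductSpace 𝕜 F] [FiniteDimensional 𝕜 F] {f g : E →ₗ[𝕜] F}
    (h : ∀ x, ‖f x‖ = ‖g x‖) : ∃ u : F ≃ₗᵢ[𝕜] F, ∀ x, f x = u (g x) := by
  have hker : g.ker ≤ f.ker := fun x hx ↦ by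
    rw [LinearMap.mem_ker] at hx ⊢
    rw [← norm_eq_zero, h, hx, norm_zero]
  let φ : g.range →ₗ[𝕜] F := g.ker.liftQ f hker ∘ₗ g.quotKerEquivRange.symm
  have hφ (x : E) : φ (g.rangeRestrict x) = f x := by
    have : g.quotKerEquivRange (g.ker.mkQ x) = g.rangeRestrict x := rfl
    simp [φ, ← this]
  let L : g.range →ₗᵢ[𝕜] F :=
    { toLinearMap := φ
      norm_map' := by
        rintro ⟨_, x, rfl⟩
        exact (congrArg norm (hφ x)).trans (h x) }
  exact ⟨L.extend.toLinearIsometryEquiv rfl,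
    fun x ↦ ((L.extend_apply (g.rangeRestrict x)).trans (hφ x)).symm⟩

variable {m n : Type*} [Fintype m]

theorem norm_toEuclideanLin_sq [Fintype n] [DecidableEq n] (X : Matrix m n 𝕜)
    (x : EuclideanSpace 𝕜 n) :
    ‖toEuclideanLin X x‖ ^ 2 = RCLike.re (inner 𝕜 x (toEuclideanLin (Xᴴ * X) x)) := by
  classical
  rw [toLpLin_mul_same, toEuclideanLin_conjTranspose_eq_adjoint, LinearMap.comp_apply,
    LinearMap.adjoint_inner_right, inner_self_eq_norm_sq]

theorem exists_unitary_mul_of_conjTranspose_mul_self_eq [DecidableEq m] [Finite n]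
    {X Y : Matrix m n 𝕜} (h : Xᴴ * X = Yᴴ * Y) : ∃ V ∈ unitaryGroup m 𝕜, X = V * Y := by
  classical
  have := Fintype.ofFinite n
  have hnorm (x : EuclideanSpace 𝕜 n) : ‖toEuclideanLin X x‖ = ‖toEuclideanLin Y x‖ := by
    rw [← sq_eq_sq₀ (norm_nonneg _) (norm_nonneg _), norm_toEuclideanLin_sq,
      norm_toEuclideanLin_sq, h]
  obtain ⟨u, hu⟩ := exists_linearIsometryEquiv_of_norm_eq hnorm
  let b := EuclideanSpace.basisFun m 𝕜
  refine ⟨_, u.toMatrix_mem_unitaryGroup b b, ?_⟩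
  have hV : toEuclideanLin (LinearMap.toMatrix b.toBasis b.toBasis u.toLinearEquiv) =
      u.toLinearEquiv := toLin_toMatrix b.toBasis b.toBasis _
  apply toEuclideanLin.injective
  rw [toLpLin_mul_same, hV]
  exact LinearMap.ext hu

theorem exists_unitary_mul_cfcAbs [DecidableEq m] (X : Matrix m m 𝕜) :
    ∃ V ∈ unitaryGroup m 𝕜, X = V * CFC.abs X := by
  apply exists_unitary_mul_of_conjTranspose_mul_self_eq
  have hH : (CFC.abs X)ᴴ = CFC.abs X := (CFC.abs_nonneg X).isSelfAdjoint
  rw [hH, CFC.abs_mul_abs, star_eq_conjTranspose]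

end PolarDecomposition

theorem commute_cfcAbs_of_star_mul_self_add_eq_one {A : Type*} [Ring A] [StarRing A]
    [TopologicalSpace A] [Algebra ℝ A] [NonUnitalContinuousFunctionalCalculus ℝ A IsSelfAdjoint]
    [PartialOrder A] [StarOrderedRing A] [NonnegSpectrumClass ℝ A] [IsTopologicalRing A]
    [T2Space A] {a b : A} (h : star a * a + star b * b = 1) :
    Commute (CFC.abs a) (CFC.abs b) := by
  have hcomm : Commute (star a * a) (star b * b) := by
    rw [eq_sub_of_add_eq' h]
    exact (Commute.one_right _).sub_right (Commute.refl _)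
  exact ((hcomm.cfcₙ_nnreal _).symm.cfcₙ_nnreal _).symm

theorem stmt_2_general {𝕜 n : Type*} [RCLike 𝕜] [Fintype n] [DecidableEq n]
    {A B C D : Matrix n n 𝕜} (hU : fromBlocks A B C D ∈ unitaryGroup (n ⊕ n) 𝕜) :
    ∃ V W Z : Matrix n n 𝕜,
      V ∈ unitaryGroup n 𝕜 ∧ W ∈ unitaryGroup n 𝕜 ∧ Z ∈ unitaryGroup n 𝕜 ∧
      A = V * CFC.abs A ∧ C = W * CFC.abs C ∧
      B = V * CFC.abs C * Zᴴ ∧ D = -(W * CFC.abs A * Zᴴ) := by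
  obtain ⟨V, hV, hA⟩ := exists_unitary_mul_cfcAbs A
  obtain ⟨W, hW, hC⟩ := exists_unitary_mul_cfcAbs C
  have hcol : star A * A + star C * C = 1 := (fromBlocks_mem_unitaryGroup_iff.1 hU).1
  have hrefl : fromBlocks (CFC.abs A) (CFC.abs C) (CFC.abs C) (-CFC.abs A) ∈
      unitaryGroup (n ⊕ n) 𝕜 :=
    fromBlocks_neg_mem_unitaryGroup_of_commute (CFC.abs_nonneg A).isSelfAdjoint
      (CFC.abs_nonneg C).isSelfAdjoint (commute_cfcAbs_of_star_mul_self_add_eq_one hcol)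
      (by rw [CFC.abs_mul_abs, CFC.abs_mul_abs, hcol])
  have hU' : fromBlocks A (V * CFC.abs C) C (-(W * CFC.abs A)) ∈ unitaryGroup (n ⊕ n) 𝕜 := by
    have hmul := mul_mem (fromBlocks_zero₁₂_zero₂₁_mem_unitaryGroup_iff.2 ⟨hV, hW⟩) hrefl
    simpa [fromBlocks_multiply, ← hA, ← hC] using hmul
  obtain ⟨Y, hY, hB, hD⟩ := exists_unitary_mul_right_of_left_blocks_eq hU hU'
  refine ⟨V, W, Yᴴ, hV, hW, Unitary.star_mem hY, hA, hC, ?_, ?_⟩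
  · rwa [conjTranspose_conjTranspose]
  · rwa [conjTranspose_conjTranspose, ← neg_mul]

theorem fromBlocks_blk_mem_unitaryGroup {d : ℕ} {U : Matrix (Fin d × Fin 2) (Fin d × Fin 2) ℂ}
    (hU : U ∈ unitaryGroup (Fin d × Fin 2) ℂ) :
    fromBlocks (blk U 0 0) (blk U 0 1) (blk U 1 0) (blk U 1 1) ∈
      unitaryGroup (Fin d ⊕ Fin d) ℂ := by
  let e : Fin d ⊕ Fin d ≃ Fin d × Fin 2 :=
    (Equiv.boolProdEquivSum (Fin d)).symm.trans <|
      (finTwoEquiv.symm.prodCongr (Equiv.refl _)).trans (Equiv.prodComm _ _)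
  have hblocks : U.submatrix e e =
      fromBlocks (blk U 0 0) (blk U 0 1) (blk U 1 0) (blk U 1 1) := by
    ext (i | i) (j | j) <;> rfl
  exact hblocks ▸ submatrix_equiv_mem_unitaryGroup hU e

/-- if a unitary `U ∈ U(2d)` has blocks satisfying `U₀₀* U₀₀ = A₀` and
`U₁₀* U₁₀ = A₁` for a two-outcome POVM `(A₀, A₁)`, then there exist unitaries
`V, W, Z ∈ U(d)` with `U₀₀ = V√A₀`, `U₁₀ = W√A₁`, `U₀₁ = V√A₁Z*`, `U₁₁ = -W√A₀Z*`. -/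
theorem stmt_2 {d : ℕ} (hd : 1 ≤ d)
    (A₀ A₁ : Matrix (Fin d) (Fin d) ℂ)
    (hA₀ : A₀.PosSemidef) (hA₁ : A₁.PosSemidef) (hsum : A₀ + A₁ = 1)
    (U : Matrix (Fin d × Fin 2) (Fin d × Fin 2) ℂ)
    (hU : U ∈ Matrix.unitaryGroup (Fin d × Fin 2) ℂ)
    (h00 : (blk U 0 0)ᴴ * blk U 0 0 = A₀)
    (h10 : (blk U 1 0)ᴴ * blk U 1 0 = A₁) :
    ∃ V W Z : Matrix (Fin d) (Fin d) ℂ,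
      V ∈ Matrix.unitaryGroup (Fin d) ℂ ∧
      W ∈ Matrix.unitaryGroup (Fin d) ℂ ∧
      Z ∈ Matrix.unitaryGroup (Fin d) ℂ ∧
      blk U 0 0 = V * CFC.sqrt A₀ ∧
      blk U 1 0 = W * CFC.sqrt A₁ ∧
      blk U 0 1 = V * CFC.sqrt A₁ * Zᴴ ∧
      blk U 1 1 = -(W * CFC.sqrt A₀ * Zᴴ) := by
  subst h00 h10
  exact stmt_2_general (fromBlocks_blk_mem_unitaryGroup hU)
end

section
/- Let (A_0, A_1) be a two-outcome POVM on ℂ^d, let V, W, Z ∈ U(d), and let U ∈ U(2d) be the unitary with blocks U_{00} = V√A_0, U_{01} = V√A_1 Z*, U_{10} = W√A_1, U_{11} = −W√A_0 Z*. Let β ∈ M_2(ℂ) be a density matrix with entries β_{ij}, and ρ ∈ M_d(ℂ) a density matrix. Then for i ∈ {0,1}, Tr[ U (ρ ⊗ β) U* (I_d ⊗ |i⟩⟨i|) ] = Tr[A_i^β ρ], where A_0^β := β_{00} A_0 + β_{01} Z √A_1 √A_0 + β_{10} √A_1 √A_0 Z* + β_{11} Z A_1 Z* and A_1^β := β_{00}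 A_1 − β_{01} Z √A_1 √A_0 − β_{10} √A_1 √A_0 Z* + β_{11} Z A_0 Z*. Moreover (A_0^β, A_1^β) is a two-outcome POVM. -/
open scoped Kronecker
open Matrix
open scoped ComplexOrder

/-- The positive semidefinite square root of a positive semidefinite matrix
(Mathlib's former `Matrix.PosSemidef.sqrt`). -/
noncomputable def Matrix.PosSemidef.sqrt {n 𝕜 : Type*} [Fintype n] [RCLike 𝕜] [DecidableEq n]
    {A : Matrix n n 𝕜} (hA : A.PosSemidef) : Matrix n n 𝕜 :=
  hA.1.eigenvectorUnitary.1 * diagonal ((↑) ∘ Real.sqrt ∘ hA.1.eigenvalues) *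
    (star hA.1.eigenvectorUnitary : Matrix n n 𝕜)

/-!
For every isometry `U` of system and probe and every POVM `(Eᵢ)` on the probe, the operators
`Tr_probe[(1 ⊗ β) U* (1 ⊗ Eᵢ) U]` reproduce the outcome statistics on every system state, are
positive by cyclicity of the partial trace under operators on the probe, and sum to `Tr β • 1`.
The operators `A₀β`, `A₁β` arise in this way from the computational-basis POVM, and `U` is an
isometry because `√A₀` and `√A₁` commute, `A₁` being `1 - A₀`.
-/

section Sqrt

variable {n 𝕜 : Type*} [Fintype n] [DecidableEq n] [RCLike 𝕜] {A B : Matrix n n 𝕜}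

theorem sqrt_eq_cfc (hA : A.PosSemidef) : hA.sqrt = cfc Real.sqrt A :=
  (hA.1.cfc_eq Real.sqrt).symm

theorem isSelfAdjoint_sqrt (hA : A.PosSemidef) : IsSelfAdjoint hA.sqrt :=
  sqrt_eq_cfc hA ▸ cfc_predicate Real.sqrt A

theorem sqrt_mul_sqrt_self (hA : A.PosSemidef) : hA.sqrt * hA.sqrt = A := by
  have hsq : (spectrum ℝ A).EqOn (fun x => √x * √x) id := by
    rw [hA.1.spectrum_real_eq_range_eigenvalues]
    rintro _ ⟨i, rfl⟩
    exact Real.mul_self_sqrt (hA.eigenvalues_nonneg i)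
  rw [sqrt_eq_cfc, ← cfc_mul Real.sqrt Real.sqrt A, cfc_congr hsq, cfc_id ℝ A hA.1.isSelfAdjoint]

theorem commute_sqrt_sqrt (hA : A.PosSemidef) (hB : B.PosSemidef) (hAB : Commute A B) :
    Commute hA.sqrt hB.sqrt := by
  rw [sqrt_eq_cfc, sqrt_eq_cfc]
  exact ((hAB.cfc_real Real.sqrt).symm.cfc_real Real.sqrt).symm

end Sqrt

theorem posSemidef_single_self {n R : Type*} [DecidableEq n] [Ring R] [PartialOrder R]
    [StarRing R] [StarOrderedRing R] (i : n) {a : R} (ha : 0 ≤ a) :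
    (single i i a).PosSemidef :=
  diagonal_single i a ▸ PosSemidef.diagonal (Pi.single_nonneg.mpr ha)

theorem commute_of_add_eq_one {R : Type*} [Ring R] {a b : R} (h : a + b = 1) : Commute a b := by
  rw [eq_sub_of_add_eq' h]
  exact (Commute.one_right a).sub_right (Commute.refl a)

section PartialTrace

variable {m n κ R : Type*} [Fintype κ]

/-- The partial trace over the second tensor factor. -/
def partialTrace [AddCommMonoid R] (M : Matrix (m × κ) (n × κ) R) : Matrix m n R :=
  ∑ k, M.submatrix (·, k) (·, k)

theorem partialTrace_apply [AddCommMonoid R] (M : Matrix (m × κ) (n × κ) R) (a : m) (b : n) :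
    partialTrace M a b = ∑ k, M (a, k) (b, k) := by
  simp only [partialTrace, Matrix.sum_apply, submatrix_apply]

theorem partialTrace_sum [AddCommMonoid R] {ι : Type*} (s : Finset ι)
    (M : ι → Matrix (m × κ) (n × κ) R) :
    partialTrace (∑ i ∈ s, M i) = ∑ i ∈ s, partialTrace (M i) := by
  ext a b
  simp only [partialTrace_apply, Matrix.sum_apply]
  exact Finset.sum_comm

theorem partialTrace_kronecker [CommSemiring R] (A : Matrix m n R) (B : Matrix κ κ R) :
    partialTrace (A ⊗ₖ B) = B.trace • A := by
  ext a b
  simp only [partialTrace_apply, kronecker_apply, Matrix.smul_apply, trace, diag_apply,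
    smul_eq_mul, Finset.sum_mul]
  exact Finset.sum_congr rfl fun _ _ => mul_comm _ _

theorem trace_partialTrace_mul [Semiring R] [Fintype m] [Fintype n] [DecidableEq κ]
    (M : Matrix (m × κ) (n × κ) R) (ρ : Matrix n m R) :
    (partialTrace M * ρ).trace = (M * (ρ ⊗ₖ (1 : Matrix κ κ R))).trace := by
  simp only [trace, diag_apply, Matrix.mul_apply, partialTrace_apply, kronecker_apply,
    one_apply, Fintype.sum_prod_type, mul_ite, mul_one, mul_zero, Finset.sum_ite_eq',
    Finset.mem_univ, if_true, Finset.sum_mul]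
  exact Finset.sum_congr rfl fun _ _ => Finset.sum_comm

theorem partialTrace_one_kronecker_mul_comm [CommSemiring R] [Fintype n] [DecidableEq n]
    {ι : Type*} [Fintype ι] (B : Matrix κ ι R) (M : Matrix (n × ι) (n × κ) R) :
    partialTrace (((1 : Matrix n n R) ⊗ₖ B) * M) =
      partialTrace (M * ((1 : Matrix n n R) ⊗ₖ B)) := by
  ext a b
  simp only [partialTrace_apply, Matrix.mul_apply, kronecker_apply, one_apply,
    Fintype.sum_prod_type_right, ite_mul, mul_ite, one_mul, zero_mul, mul_zero,
    Finset.sum_ite_eq, Finset.sum_ite_eq', Finset.mem_univ, if_true]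
  rw [Finset.sum_comm]
  simp only [mul_comm]

theorem posSemidef_partialTrace {𝕜 : Type*} [RCLike 𝕜]
    {M : Matrix (n × κ) (n × κ) 𝕜} (hM : M.PosSemidef) : (partialTrace M).PosSemidef :=
  posSemidef_sum _ fun k _ => hM.submatrix (·, k)

end PartialTrace

section InducedEffect

variable {m n ι κ R : Type*} [Fintype m] [Fintype n] [Fintype ι] [Fintype κ]
  [DecidableEq m] [DecidableEq n]

/-- The effect on the system that is measured by coupling the system through `U` to a probe in
state `β` and reading out the effect `E` on the probe: the image of `1 ⊗ E` in the Heisenberg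
picture. `U` may change both spaces, from `n × κ` to `m × ι`, with the probe as second factor. -/
def inducedEffect [CommSemiring R] [StarRing R] (U : Matrix (m × ι) (n × κ) R)
    (β : Matrix κ κ R) (E : Matrix ι ι R) : Matrix n n R :=
  partialTrace (((1 : Matrix n n R) ⊗ₖ β) * (Uᴴ * ((1 : Matrix m m R) ⊗ₖ E) * U))

theorem trace_inducedEffect_mul [CommSemiring R] [StarRing R] (U : Matrix (m × ι) (n × κ) R)
    (β : Matrix κ κ R) (E : Matrix ι ι R) (ρ : Matrix n n R) :
    (inducedEffect U β E * ρ).trace =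
      (U * (ρ ⊗ₖ β) * Uᴴ * ((1 : Matrix m m R) ⊗ₖ E)).trace := by
  classical
  let F : Matrix (m × ι) (m × ι) R := 1 ⊗ₖ E
  calc (inducedEffect U β E * ρ).trace
      = ((1 ⊗ₖ β) * (Uᴴ * F * U) * (ρ ⊗ₖ 1)).trace := trace_partialTrace_mul _ _
    _ = ((ρ ⊗ₖ 1) * (1 ⊗ₖ β) * (Uᴴ * F * U)).trace := by rw [trace_mul_comm, ← Matrix.mul_assoc]
    _ = ((ρ ⊗ₖ β) * (Uᴴ * F) * U).trace := by
        rw [← mul_kronecker_mul, Matrix.mul_one, Matrix.one_mul, Matrix.mul_assoc (ρ ⊗ₖ β)]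
    _ = (U * (ρ ⊗ₖ β) * Uᴴ * F).trace := by
        rw [trace_mul_comm]
        simp only [Matrix.mul_assoc]

theorem posSemidef_inducedEffect {𝕜 : Type*} [RCLike 𝕜] (U : Matrix (m × ι) (n × κ) 𝕜)
    {β : Matrix κ κ 𝕜} (hβ : β.PosSemidef) {E : Matrix ι ι 𝕜} (hE : E.PosSemidef) :
    (inducedEffect U β E).PosSemidef := by
  classical
  set B : Matrix (n × κ) (n × κ) 𝕜 := 1 ⊗ₖ hβ.sqrt with hB
  have hBH : Bᴴ = B := by
    rw [hB, conjTranspose_kronecker, conjTranspose_one, (isSelfAdjoint_sqrt hβ).isHermitian]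
  have hBB : (1 : Matrix n n 𝕜) ⊗ₖ β = B * B := by
    rw [hB, ← mul_kronecker_mul, Matrix.one_mul, sqrt_mul_sqrt_self]
  have hX : (Uᴴ * ((1 : Matrix m m 𝕜) ⊗ₖ E) * U).PosSemidef :=
    (PosSemidef.one.kronecker hE).conjTranspose_mul_mul_same U
  rw [inducedEffect, hBB, Matrix.mul_assoc, hB, partialTrace_one_kronecker_mul_comm, ← hB]
  exact posSemidef_partialTrace (by simpa only [hBH] using hX.mul_mul_conjTranspose_same B)

theorem sum_inducedEffect [DecidableEq ι] [DecidableEq κ] [CommSemiring R] [StarRing R]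
    {τ : Type*} [Fintype τ] {U : Matrix (m × ι) (n × κ) R} (hU : Uᴴ * U = 1)
    (β : Matrix κ κ R) {E : τ → Matrix ι ι R} (hE : ∑ i, E i = 1) :
    ∑ i, inducedEffect U β (E i) = β.trace • 1 := by
  have hsum : ∑ i, (1 : Matrix m m R) ⊗ₖ E i = 1 := by
    calc ∑ i, (1 : Matrix m m R) ⊗ₖ E i
        = 1 ⊗ₖ ∑ i, E i := (map_sum (kroneckerBilinear (R := R) (1 : Matrix m m R)) _ _).symm
      _ = 1 := by rw [hE, one_kronecker_one]
  simp only [inducedEffect]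
  rw [← partialTrace_sum, ← Matrix.mul_sum, ← Matrix.sum_mul, ← Matrix.mul_sum, hsum,
    Matrix.mul_one, hU, Matrix.mul_one, partialTrace_kronecker]

end InducedEffect

section Rows

variable {ι κ R : Type*} [Fintype ι]

theorem conjTranspose_mul_single_mul [DecidableEq ι] [Semiring R] [StarRing R]
    (K : Matrix ι κ R) (i : ι) :
    Kᴴ * single i i (1 : R) * K = vecMulVec (star (K i)) (K i) := by
  ext k j
  rw [Matrix.mul_assoc, Matrix.mul_apply, Finset.sum_eq_single i]
  all_goals simp +contextual [vecMulVec_apply, single_mul_apply_of_ne]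

theorem conjTranspose_mul_self_eq_sum_vecMulVec [NonUnitalNonAssocSemiring R] [StarRing R]
    (K : Matrix ι κ R) : Kᴴ * K = ∑ i, vecMulVec (star (K i)) (K i) := by
  ext k j
  simp only [Matrix.mul_apply, Matrix.sum_apply, vecMulVec_apply, conjTranspose_apply,
    Pi.star_apply]

end Rows

section ProbeBlocks

variable {m n ι κ τ R : Type*}

/-- The operator `∑ i j, K i j ⊗ |i⟩⟨j|` assembled from its blocks `K i j`; the probe is the
second tensor factor, so the block indices are the second components. -/
def ofProbeBlocks (K : Matrix ι κ (Matrix m n R)) : Matrix (m × ι) (n × κ) R :=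
  of fun p q => K p.2 q.2 p.1 q.1

theorem ofProbeBlocks_apply (K : Matrix ι κ (Matrix m n R)) (p : m × ι) (q : n × κ) :
    ofProbeBlocks K p q = K p.2 q.2 p.1 q.1 := rfl

theorem conjTranspose_ofProbeBlocks [Star R] (K : Matrix ι κ (Matrix n n R)) :
    (ofProbeBlocks K)ᴴ = ofProbeBlocks Kᴴ := rfl

theorem ofProbeBlocks_mul [Fintype n] [Fintype κ] [NonUnitalNonAssocSemiring R]
    (K : Matrix ι κ (Matrix n n R)) (L : Matrix κ τ (Matrix n n R)) :
    ofProbeBlocks K * ofProbeBlocks L = ofProbeBlocks (K * L) := by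
  ext p q
  simp only [ofProbeBlocks_apply, Matrix.mul_apply, Matrix.sum_apply,
    Fintype.sum_prod_type_right]

theorem ofProbeBlocks_one [DecidableEq n] [DecidableEq κ] [Zero R] [One R] :
    ofProbeBlocks (1 : Matrix κ κ (Matrix n n R)) = 1 := by
  ext ⟨a, k⟩ ⟨b, l⟩
  by_cases hkl : k = l <;> simp [ofProbeBlocks_apply, one_apply, hkl]

theorem ofProbeBlocks_single [MulZeroOneClass R] [DecidableEq ι] [DecidableEq κ]
    (A : Matrix m n R) (i : ι) (j : κ) :
    ofProbeBlocks (single i j A) = A ⊗ₖ single i j 1 := by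
  ext p q
  by_cases h : i = p.2 ∧ j = q.2 <;> simp [ofProbeBlocks_apply, h]

theorem ofProbeBlocks_fin_two [NonAssocSemiring R] (A B C D : Matrix m n R) :
    ofProbeBlocks !![A, B; C, D] = A ⊗ₖ single (0 : Fin 2) (0 : Fin 2) 1 + B ⊗ₖ single 0 1 1
      + C ⊗ₖ single 1 0 1 + D ⊗ₖ single 1 1 1 := by
  ext ⟨a, i⟩ ⟨b, j⟩
  fin_cases i <;> fin_cases j <;> simp [ofProbeBlocks_apply]

theorem partialTrace_one_kronecker_mul_ofProbeBlocks [Fintype n] [DecidableEq n] [Fintype κ]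
    [Fintype ι] [Semiring R] (β : Matrix ι κ R) (K : Matrix κ ι (Matrix n m R)) :
    partialTrace (((1 : Matrix n n R) ⊗ₖ β) * ofProbeBlocks K) = ∑ j, ∑ k, β j k • K k j := by
  ext a b
  simp [partialTrace_apply, ofProbeBlocks_apply, Matrix.mul_apply, Matrix.sum_apply, one_apply,
    Fintype.sum_prod_type_right]

theorem inducedEffect_ofProbeBlocks_single [Fintype n] [DecidableEq n] [Fintype ι]
    [DecidableEq ι] [Fintype κ] [CommSemiring R] [StarRing R]
    (K : Matrix ι κ (Matrix n n R)) (β : Matrix κ κ R) (i : ι) :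
    inducedEffect (ofProbeBlocks K) β (single i i 1) =
      ∑ j, ∑ k, β j k • vecMulVec (star (K i)) (K i) k j := by
  rw [inducedEffect, conjTranspose_ofProbeBlocks, ← ofProbeBlocks_single, ofProbeBlocks_mul,
    ofProbeBlocks_mul, conjTranspose_mul_single_mul, partialTrace_one_kronecker_mul_ofProbeBlocks]

end ProbeBlocks

section InteractionBlocks

variable {𝒜 : Type*} [Ring 𝒜] [StarRing 𝒜] {V W Z S T : 𝒜}

/-- The blocks of the interaction unitary, with `S` and `T` in the roles of `√A₀` and `√A₁`. -/
def interactionBlocks (V W Z S T : 𝒜) : Matrix (Fin 2) (Fin 2) 𝒜 :=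
  !![V * S, V * T * star Z; W * T, -(W * S * star Z)]

theorem vecMulVec_interactionBlocks_zero (hV : star V * V = 1) (hS : IsSelfAdjoint S)
    (hT : IsSelfAdjoint T) (hST : Commute S T) :
    vecMulVec (star (interactionBlocks V W Z S T 0)) (interactionBlocks V W Z S T 0) =
      !![S * S, T * S * star Z; Z * T * S, Z * (T * T) * star Z] := by
  have hVV (X Y : 𝒜) : X * star V * (V * Y) = X * Y := by
    rw [mul_assoc, ← mul_assoc (star V), hV, one_mul]
  ext k j
  fin_cases k <;> fin_cases j <;>
    simp [interactionBlocks, vecMulVec_apply, hS.star_eq, hT.star_eq, ← hST.eq, hVV, mul_assoc]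

theorem vecMulVec_interactionBlocks_one (hW : star W * W = 1) (hS : IsSelfAdjoint S)
    (hT : IsSelfAdjoint T) (hST : Commute S T) :
    vecMulVec (star (interactionBlocks V W Z S T 1)) (interactionBlocks V W Z S T 1) =
      !![T * T, -(T * S * star Z); -(Z * T * S), Z * (S * S) * star Z] := by
  have hWW (X Y : 𝒜) : X * star W * (W * Y) = X * Y := by
    rw [mul_assoc, ← mul_assoc (star W), hW, one_mul]
  ext k j
  fin_cases k <;> fin_cases j <;>
    simp [interactionBlocks, vecMulVec_apply, hS.star_eq, hT.star_eq, hST.eq, hWW, mul_assoc]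

theorem conjTranspose_mul_self_interactionBlocks (hV : star V * V = 1) (hW : star W * W = 1)
    (hZ : Z * star Z = 1) (hS : IsSelfAdjoint S) (hT : IsSelfAdjoint T) (hST : Commute S T)
    (hsum : S * S + T * T = 1) :
    (interactionBlocks V W Z S T)ᴴ * interactionBlocks V W Z S T = 1 := by
  have hZZ : Z * (T * T) * star Z + Z * (S * S) * star Z = 1 := by
    rw [← add_mul, ← mul_add, add_comm, hsum, mul_one, hZ]
  rw [conjTranspose_mul_self_eq_sum_vecMulVec, Fin.sum_univ_two,
    vecMulVec_interactionBlocks_zero hV hS hT hST, vecMulVec_interactionBlocks_one hW hS hT hST,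
    one_fin_two]
  simp [hsum, hZZ]

variable {n R : Type*} [Fintype n] [DecidableEq n] [CommRing R] [StarRing R]
  {v w z s t : Matrix n n R}

theorem inducedEffect_interactionBlocks_zero (hv : star v * v = 1) (hs : IsSelfAdjoint s)
    (ht : IsSelfAdjoint t) (hst : Commute s t) (β : Matrix (Fin 2) (Fin 2) R) :
    inducedEffect (ofProbeBlocks (interactionBlocks v w z s t)) β (single 0 0 1) =
      β 0 0 • (s * s) + β 0 1 • (z * t * s) + β 1 0 • (t * s * zᴴ)
        + β 1 1 • (z * (t * t) * zᴴ) := by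
  rw [inducedEffect_ofProbeBlocks_single, vecMulVec_interactionBlocks_zero hv hs ht hst]
  simp [Fin.sum_univ_two, star_eq_conjTranspose, add_assoc]

theorem inducedEffect_interactionBlocks_one (hw : star w * w = 1) (hs : IsSelfAdjoint s)
    (ht : IsSelfAdjoint t) (hst : Commute s t) (β : Matrix (Fin 2) (Fin 2) R) :
    inducedEffect (ofProbeBlocks (interactionBlocks v w z s t)) β (single 1 1 1) =
      β 0 0 • (t * t) - β 0 1 • (z * t * s) - β 1 0 • (t * s * zᴴ)
        + β 1 1 • (z * (s * s) * zᴴ) := by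
  rw [inducedEffect_ofProbeBlocks_single, vecMulVec_interactionBlocks_one hw hs ht hst]
  simp [Fin.sum_univ_two, star_eq_conjTranspose, sub_eq_add_neg, add_assoc]

end InteractionBlocks

theorem stmt_4_general {n 𝕜 : Type*} [Fintype n] [DecidableEq n] [RCLike 𝕜]
    (A₀ A₁ : Matrix n n 𝕜)
    (hA₀ : A₀.PosSemidef) (hA₁ : A₁.PosSemidef) (hsum : A₀ + A₁ = 1)
    (V W Z : Matrix n n 𝕜)
    (hV : V ∈ Matrix.unitaryGroup n 𝕜)
    (hW : W ∈ Matrix.unitaryGroup n 𝕜)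
    (hZ : Z ∈ Matrix.unitaryGroup n 𝕜)
    (U : Matrix (n × Fin 2) (n × Fin 2) 𝕜)
    (hU : U = (V * hA₀.sqrt) ⊗ₖ single (0 : Fin 2) (0 : Fin 2) (1 : 𝕜)
            + (V * hA₁.sqrt * Zᴴ) ⊗ₖ single (0 : Fin 2) (1 : Fin 2) (1 : 𝕜)
            + (W * hA₁.sqrt) ⊗ₖ single (1 : Fin 2) (0 : Fin 2) (1 : 𝕜)
            + (-(W * hA₀.sqrt * Zᴴ)) ⊗ₖ single (1 : Fin 2) (1 : Fin 2) (1 : 𝕜))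
    (β : Matrix (Fin 2) (Fin 2) 𝕜) (hβ : β.PosSemidef) (hβtr : β.trace = 1)
    (ρ : Matrix n n 𝕜)
    (A₀β A₁β : Matrix n n 𝕜)
    (hA₀β : A₀β = β 0 0 • A₀ + β 0 1 • (Z * hA₁.sqrt * hA₀.sqrt)
        + β 1 0 • (hA₁.sqrt * hA₀.sqrt * Zᴴ) + β 1 1 • (Z * A₁ * Zᴴ))
    (hA₁β : A₁β = β 0 0 • A₁ - β 0 1 • (Z * hA₁.sqrt * hA₀.sqrt)
        - β 1 0 • (hA₁.sqrt * hA₀.sqrt * Zᴴ) + β 1 1 • (Z * A₀ * Zᴴ)) :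
    (U * (ρ ⊗ₖ β) * Uᴴ * ((1 : Matrix n n 𝕜) ⊗ₖ single (0 : Fin 2) (0 : Fin 2) (1 : 𝕜))).trace
      = (A₀β * ρ).trace ∧
    (U * (ρ ⊗ₖ β) * Uᴴ * ((1 : Matrix n n 𝕜) ⊗ₖ single (1 : Fin 2) (1 : Fin 2) (1 : 𝕜))).trace
      = (A₁β * ρ).trace ∧
    A₀β.PosSemidef ∧ A₁β.PosSemidef ∧ A₀β + A₁β = 1 := by
  have hS := isSelfAdjoint_sqrt hA₀
  have hT := isSelfAdjoint_sqrt hA₁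
  have hST : Commute hA₀.sqrt hA₁.sqrt :=
    commute_sqrt_sqrt hA₀ hA₁ (commute_of_add_eq_one hsum)
  have hVV := mem_unitaryGroup_iff'.mp hV
  have hWW := mem_unitaryGroup_iff'.mp hW
  have hblocks : U = ofProbeBlocks (interactionBlocks V W Z hA₀.sqrt hA₁.sqrt) :=
    hU.trans (ofProbeBlocks_fin_two ..).symm
  have hUU : Uᴴ * U = 1 := by
    rw [hblocks, conjTranspose_ofProbeBlocks, ofProbeBlocks_mul,
      conjTranspose_mul_self_interactionBlocks hVV hWW (mem_unitaryGroup_iff.mp hZ) hS hT hST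
        (by rw [sqrt_mul_sqrt_self, sqrt_mul_sqrt_self, hsum]), ofProbeBlocks_one]
  obtain rfl : A₀β = inducedEffect U β (single 0 0 1) := by
    rw [hA₀β, hblocks, inducedEffect_interactionBlocks_zero hVV hS hT hST, sqrt_mul_sqrt_self,
      sqrt_mul_sqrt_self]
  obtain rfl : A₁β = inducedEffect U β (single 1 1 1) := by
    rw [hA₁β, hblocks, inducedEffect_interactionBlocks_one hWW hS hT hST, sqrt_mul_sqrt_self,
      sqrt_mul_sqrt_self]
  refine ⟨(trace_inducedEffect_mul ..).symm, (trace_inducedEffect_mul ..).symm,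
    posSemidef_inducedEffect U hβ (posSemidef_single_self 0 zero_le_one),
    posSemidef_inducedEffect U hβ (posSemidef_single_self 1 zero_le_one), ?_⟩
  rw [← Fin.sum_univ_two fun i => inducedEffect U β (single i i 1),
    sum_inducedEffect hUU β sum_single_one, hβtr, one_smul]

/-- the effective POVM induced by an imperfect indirect measurement with a
general two-level probe `β` and interaction unitary with blocks `V√A₀, V√A₁Z*, W√A₁, -W√A₀Z*`. -/
theorem stmt_4 {d : ℕ} (hd : 1 ≤ d)
    (A₀ A₁ : Matrix (Fin d) (Fin d) ℂ)
    (hA₀ : A₀.PosSemidef) (hA₁ : A₁.PosSemidef) (hsum : A₀ + A₁ = 1)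
    (V W Z : Matrix (Fin d) (Fin d) ℂ)
    (hV : V ∈ Matrix.unitaryGroup (Fin d) ℂ)
    (hW : W ∈ Matrix.unitaryGroup (Fin d) ℂ)
    (hZ : Z ∈ Matrix.unitaryGroup (Fin d) ℂ)
    (U : Matrix (Fin d × Fin 2) (Fin d × Fin 2) ℂ)
    (hU : U = (V * hA₀.sqrt) ⊗ₖ Matrix.single (0 : Fin 2) (0 : Fin 2) (1 : ℂ)
            + (V * hA₁.sqrt * Zᴴ) ⊗ₖ Matrix.single (0 : Fin 2) (1 : Fin 2) (1 : ℂ)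
            + (W * hA₁.sqrt) ⊗ₖ Matrix.single (1 : Fin 2) (0 : Fin 2) (1 : ℂ)
            + (-(W * hA₀.sqrt * Zᴴ)) ⊗ₖ Matrix.single (1 : Fin 2) (1 : Fin 2) (1 : ℂ))
    (β : Matrix (Fin 2) (Fin 2) ℂ) (hβ : β.PosSemidef) (hβtr : β.trace = 1)
    (ρ : Matrix (Fin d) (Fin d) ℂ) (hρ : ρ.PosSemidef) (hρtr : ρ.trace = 1)
    (A₀β A₁β : Matrix (Fin d) (Fin d) ℂ)
    (hA₀β : A₀β = β 0 0 • A₀ + β 0 1 • (Z * hA₁.sqrt * hA₀.sqrt)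
        + β 1 0 • (hA₁.sqrt * hA₀.sqrt * Zᴴ) + β 1 1 • (Z * A₁ * Zᴴ))
    (hA₁β : A₁β = β 0 0 • A₁ - β 0 1 • (Z * hA₁.sqrt * hA₀.sqrt)
        - β 1 0 • (hA₁.sqrt * hA₀.sqrt * Zᴴ) + β 1 1 • (Z * A₀ * Zᴴ)) :
    Matrix.trace (U * (ρ ⊗ₖ β) * Uᴴ *
        ((1 : Matrix (Fin d) (Fin d) ℂ) ⊗ₖ Matrix.single (0 : Fin 2) (0 : Fin 2) (1 : ℂ)))
      = Matrix.trace (A₀β * ρ) ∧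
    Matrix.trace (U * (ρ ⊗ₖ β) * Uᴴ *
        ((1 : Matrix (Fin d) (Fin d) ℂ) ⊗ₖ Matrix.single (1 : Fin 2) (1 : Fin 2) (1 : ℂ)))
      = Matrix.trace (A₁β * ρ) ∧
    A₀β.PosSemidef ∧ A₁β.PosSemidef ∧ A₀β + A₁β = 1 :=
  stmt_4_general A₀ A₁ hA₀ hA₁ hsum V W Z hV hW hZ U hU β hβ hβtr ρ A₀β A₁β hA₀β hA₁β
end

section
/- Let N, d ≥ 1 and let μ be a nice probability measure on U((N+1)d). Then for every i ∈ {0, …, N} and all c, k ∈ {1, …, N} with c ≠ k, 𝔼_{U∼μ}[ U_{ik}* U_{ic} ] = 0; and for every c ∈ {1, …, N}, the matrix 𝔼_{U∼μ}[ U_{ic}* U_{ic} ] is a scalar multiple of the identity, namely 𝔼_{U∼μ}[ U_{ic}* U_{ic} ] = Γ_{ic} I_d with Γ_{ic} := (1/d) Tr[ 𝔼_{U∼μ}[ U_{ic}* U_{ic} ] ]. -/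
open scoped Kronecker
open Matrix MeasureTheory
open scoped ComplexOrder

/-- Entrywise expectation of a matrix-valued function. -/
noncomputable def expec {G : Type*} [MeasurableSpace G] {d : ℕ} (μ : Measure G)
    (f : G → Matrix (Fin d) (Fin d) ℂ) : Matrix (Fin d) (Fin d) ℂ :=
  Matrix.of fun a b => ∫ g, f g a b ∂μ

/-!
Invariance under `U ↦ U Z` replaces `U_{ik}* U_{jc}` by `Z_k* (U_{ik}* U_{jc}) Z_c` without
changing its expectation. If `c ≠ k`, one of the two differs from the distinguished index, and
`-I` in that block alone reverses the sign of the expectation, which therefore vanishes. For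
`c = k` the expectation is invariant under conjugation by unitaries: sign changes kill the
off-diagonal entries and transpositions identify the diagonal ones. As the σ-algebra is arbitrary,
the entries need not be integrable and conjugation cannot be pulled out of the integral; signed
permutation matrices suffice, and they never mix different entries.
-/

section Integral

variable {X E : Type*} [MeasurableSpace X] {μ : Measure X} [NormedAddCommGroup E]

theorem aemeasurable_of_map_eq_self {φ : X → X} (h : μ.map φ = μ) : AEMeasurable φ μ := by
  rcases eq_or_ne μ 0 with rfl | hμ
  · exact aemeasurable_zero_measure
  · exact AEMeasurable.of_map_ne_zero (h.symm ▸ hμ)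

theorem aestronglyMeasurable_comp_of_map_eq_self {φ : X → X} (h : μ.map φ = μ) {f : X → E}
    (hf : AEStronglyMeasurable f μ) : AEStronglyMeasurable (fun x => f (φ x)) μ :=
  AEStronglyMeasurable.comp_aemeasurable (h.symm ▸ hf) (aemeasurable_of_map_eq_self h)

theorem integral_comp_equiv_of_map_eq_self [NormedSpace ℝ E] (e : X ≃ X) (he : μ.map e = μ)
    (he_symm : μ.map e.symm = μ) (f : X → E) : ∫ x, f (e x) ∂μ = ∫ x, f x ∂μ := by
  by_cases hf : AEStronglyMeasurable f μ
  · rw [← integral_map (aemeasurable_of_map_eq_self he) (he.symm ▸ hf), he]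
  · have hfe : ¬ AEStronglyMeasurable (fun x => f (e x)) μ := fun hfe =>
      hf (by simpa using aestronglyMeasurable_comp_of_map_eq_self he_symm hfe)
    rw [integral_non_aestronglyMeasurable hf, integral_non_aestronglyMeasurable hfe]

end Integral

section EntrywiseIntegral

variable {X m n E : Type*} [MeasurableSpace X] {μ : Measure X}
  [NormedAddCommGroup E] [NormedSpace ℝ E]

/-- The expectation of a matrix-valued function, taken entry by entry; `expec` is the case of
square complex matrices indexed by `Fin d`. An entry that is not integrable contributes `0`. -/
noncomputable def entrywiseIntegral (μ : Measure X) (F : X → Matrix m n E) : Matrix m n E :=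
  Matrix.of fun a b => ∫ x, F x a b ∂μ

theorem entrywiseIntegral_apply (F : X → Matrix m n E) (a : m) (b : n) :
    entrywiseIntegral μ F a b = ∫ x, F x a b ∂μ :=
  rfl

theorem entrywiseIntegral_neg (F : X → Matrix m n E) :
    entrywiseIntegral μ (fun x => -F x) = -entrywiseIntegral μ F := by
  ext a b
  exact integral_neg fun x => F x a b

theorem entrywiseIntegral_comp_equiv (e : X ≃ X) (he : μ.map e = μ) (he_symm : μ.map e.symm = μ)
    (F : X → Matrix m n E) :
    entrywiseIntegral μ (fun x => F (e x)) = entrywiseIntegral μ F := by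
  ext a b
  exact integral_comp_equiv_of_map_eq_self e he he_symm fun x => F x a b

end EntrywiseIntegral

section Matrices

variable {n R : Type*} [Fintype n] [DecidableEq n]

theorem eq_trace_div_card_smul_one [Field R] [CharZero R] {A : Matrix n n R}
    (hoff : A.IsDiag) (hdiag : ∀ a b, A a a = A b b) :
    A = (A.trace / Fintype.card n) • (1 : Matrix n n R) := by
  ext a b
  by_cases hab : a = b
  · subst hab
    have : Nonempty n := ⟨a⟩
    have htrace : A.trace = Fintype.card n * A a a := by
      simp [Matrix.trace, hdiag _ a]
    simp [htrace]
  · simp [hoff hab, hab]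

variable [CommRing R] [StarRing R]

theorem permMatrix_mem_unitaryGroup (σ : Equiv.Perm n) :
    σ.permMatrix R ∈ unitaryGroup n R := by
  rw [mem_unitaryGroup_iff, star_eq_conjTranspose, conjTranspose_permMatrix, ← permMatrix_mul,
    inv_mul_cancel, permMatrix_one]

theorem diagonal_mem_unitaryGroup {v : n → R} (hv : ∀ a, v a ∈ unitary R) :
    diagonal v ∈ unitaryGroup n R := by
  simp only [mem_unitaryGroup_iff, star_eq_conjTranspose, diagonal_conjTranspose,
    diagonal_mul_diagonal, Pi.star_apply, Unitary.mul_star_self_of_mem (hv _), diagonal_one]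

theorem conjTranspose_permMatrix_mul_mul_permMatrix_apply (σ : Equiv.Perm n) (A : Matrix n n R)
    (a b : n) : ((σ.permMatrix R)ᴴ * A * σ.permMatrix R) a b = A (σ⁻¹ a) (σ⁻¹ b) := by
  rw [conjTranspose_permMatrix, PEquiv.toMatrix_toPEquiv_mul, PEquiv.mul_toMatrix_toPEquiv]
  rfl

end Matrices

section ConjInvariant

variable {X n 𝕜 : Type*} [MeasurableSpace X] {μ : Measure X} [RCLike 𝕜] [Fintype n]
  [DecidableEq n] {F : X → Matrix n n 𝕜}

theorem isDiag_entrywiseIntegral_of_conj_invariant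
    (hF : ∀ W ∈ unitaryGroup n 𝕜,
      entrywiseIntegral μ (fun x => Wᴴ * F x * W) = entrywiseIntegral μ F) :
    (entrywiseIntegral μ F).IsDiag := by
  intro a b hab
  let v : n → 𝕜 := Function.update 1 a (-1)
  have hv : ∀ j, v j ∈ unitary 𝕜 := fun j => by
    rcases eq_or_ne j a with rfl | hj <;> simp [v, Unitary.mem_iff, *]
  have hneg : ∀ x, ((diagonal v)ᴴ * F x * diagonal v) a b = -F x a b := fun x => by
    simp [v, diagonal_conjTranspose, hab.symm]
  have hinv := congr_fun₂ (hF _ (diagonal_mem_unitaryGroup hv)) a b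
  simp only [entrywiseIntegral_apply, hneg, integral_neg] at hinv
  exact neg_eq_self.mp hinv

theorem entrywiseIntegral_apply_self_eq_of_conj_invariant
    (hF : ∀ W ∈ unitaryGroup n 𝕜,
      entrywiseIntegral μ (fun x => Wᴴ * F x * W) = entrywiseIntegral μ F) (a b : n) :
    entrywiseIntegral μ F a a = entrywiseIntegral μ F b b := by
  have hinv := congr_fun₂ (hF _ (permMatrix_mem_unitaryGroup (Equiv.swap a b))) a a
  simpa only [entrywiseIntegral_apply, conjTranspose_permMatrix_mul_mul_permMatrix_apply,
    Equiv.swap_inv, Equiv.swap_apply_left] using hinv.symm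

theorem entrywiseIntegral_eq_smul_one_of_conj_invariant
    (hF : ∀ W ∈ unitaryGroup n 𝕜,
      entrywiseIntegral μ (fun x => Wᴴ * F x * W) = entrywiseIntegral μ F) :
    entrywiseIntegral μ F =
      ((entrywiseIntegral μ F).trace / Fintype.card n) • (1 : Matrix n n 𝕜) :=
  eq_trace_div_card_smul_one (isDiag_entrywiseIntegral_of_conj_invariant hF)
    (entrywiseIntegral_apply_self_eq_of_conj_invariant hF)

end ConjInvariant

section Blocks

variable {l m n ι κ R : Type*}

/-- The `(i, j)` block of a matrix whose rows and columns are indexed by products, so that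
`block U i j` is `U_{ij}` in `U = Σ U_{ij} ⊗ |i⟩⟨j|`; `blk` is the square case over `ℂ`. -/
def block (A : Matrix (m × ι) (n × κ) R) (i : ι) (j : κ) : Matrix m n R :=
  A.submatrix (·, i) (·, j)

variable [Fintype ι] [DecidableEq ι]

theorem block_mul_blockDiagonal [Fintype m] [NonUnitalNonAssocSemiring R]
    (A : Matrix (l × κ) (m × ι) R) (Z : ι → Matrix m n R) (i : κ) (c : ι) :
    block (A * blockDiagonal Z) i c = block A i c * Z c := by
  ext a b
  simp [block, Matrix.mul_apply, Fintype.sum_prod_type, blockDiagonal_apply]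

theorem blockDiagonal_eq_sum_kronecker_single [NonAssocSemiring R] (Z : ι → Matrix m n R) :
    blockDiagonal Z = ∑ c, Z c ⊗ₖ Matrix.single c c (1 : R) := by
  ext ⟨a, i⟩ ⟨b, j⟩
  simp [Matrix.sum_apply, blockDiagonal_apply, Matrix.single_apply, ite_and]

variable [Fintype m] [DecidableEq m] [CommRing R] [StarRing R]

/-- The unitary `Z = Σ Z_c ⊗ |c⟩⟨c|` with unitary diagonal blocks `Z_c`, as a homomorphism in the
family of blocks. -/
def unitaryBlockDiagonal : (ι → unitaryGroup m R) →* unitaryGroup (m × ι) R where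
  toFun Z := ⟨blockDiagonal fun c => (Z c : Matrix m m R), by
    rw [mem_unitaryGroup_iff, star_eq_conjTranspose, blockDiagonal_conjTranspose,
      ← blockDiagonal_mul, ← blockDiagonal_one]
    exact congr_arg blockDiagonal (funext fun c => mem_unitaryGroup_iff.mp (Z c).2)⟩
  map_one' := Subtype.ext blockDiagonal_one
  map_mul' Z W := Subtype.ext (blockDiagonal_mul (fun c => (Z c).1) fun c => (W c).1)

theorem coe_unitaryBlockDiagonal (Z : ι → unitaryGroup m R) :
    (unitaryBlockDiagonal Z : Matrix (m × ι) (m × ι) R) = blockDiagonal fun c => (Z c).1 :=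
  rfl

end Blocks

section Nice

variable {n ι 𝕜 : Type*} [RCLike 𝕜] [Fintype n] [DecidableEq n] [Fintype ι] [DecidableEq ι]
  [MeasurableSpace (unitaryGroup (n × ι) 𝕜)]

/-- A measure on `U(n × ι)` is nice with respect to the index `o` if it is invariant under right
multiplication by the block diagonal unitaries whose block at `o` is the identity. The paper has
`o = 0` in `ι = {0, …, N}`. -/
def IsNice (o : ι) (μ : Measure (unitaryGroup (n × ι) 𝕜)) : Prop :=
  ∀ Z : ι → unitaryGroup n 𝕜, Z o = 1 → μ.map (· * unitaryBlockDiagonal Z) = μ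

namespace IsNice

variable {o : ι} {μ : Measure (unitaryGroup (n × ι) 𝕜)}

theorem of_map_mul_sum_kronecker_single
    (h : ∀ Z : unitaryGroup (n × ι) 𝕜,
      (∃ Zc : ι → Matrix n n 𝕜, Zc o = 1 ∧ (∀ c, Zc c ∈ unitaryGroup n 𝕜) ∧
        (Z : Matrix (n × ι) (n × ι) 𝕜) = ∑ c, Zc c ⊗ₖ Matrix.single c c (1 : 𝕜)) →
      μ.map (· * Z) = μ) :
    IsNice o μ := fun Z hZ =>
  h (unitaryBlockDiagonal Z) ⟨fun c => (Z c).1, congr_arg Subtype.val hZ, fun c => (Z c).2,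
    blockDiagonal_eq_sum_kronecker_single fun c => (Z c).1⟩

theorem entrywiseIntegral_mul_unitaryBlockDiagonal {p q : Type*} (hμ : IsNice o μ)
    {Z : ι → unitaryGroup n 𝕜} (hZ : Z o = 1) (F : unitaryGroup (n × ι) 𝕜 → Matrix p q 𝕜) :
    entrywiseIntegral μ (fun U => F (U * unitaryBlockDiagonal Z)) = entrywiseIntegral μ F := by
  refine entrywiseIntegral_comp_equiv (Equiv.mulRight (unitaryBlockDiagonal Z)) (hμ Z hZ) ?_ F
  have hinv : μ.map (· * (unitaryBlockDiagonal Z)⁻¹) = μ := by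
    simpa only [map_inv] using hμ Z⁻¹ (by simp [hZ])
  exact hinv

theorem entrywiseIntegral_conjTranspose_block_mul_block (hμ : IsNice o μ)
    {Z : ι → unitaryGroup n 𝕜} (hZ : Z o = 1) (i j k c : ι) :
    entrywiseIntegral μ (fun U => (Z k).1ᴴ * ((block U.1 i k)ᴴ * block U.1 j c) * (Z c).1) =
      entrywiseIntegral μ (fun U => (block U.1 i k)ᴴ * block U.1 j c) := by
  rw [← hμ.entrywiseIntegral_mul_unitaryBlockDiagonal hZ
    fun U => (block U.1 i k)ᴴ * block U.1 j c]
  simp only [UnitaryGroup.mul_val, coe_unitaryBlockDiagonal, block_mul_blockDiagonal,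
    conjTranspose_mul, Matrix.mul_assoc]

theorem entrywiseIntegral_conjTranspose_block_mul_block_eq_zero_of_sign (hμ : IsNice o μ)
    {Z : ι → unitaryGroup n 𝕜} (hZ : Z o = 1) (i j : ι) {k c : ι}
    (hsign : ∀ A : Matrix n n 𝕜, (Z k).1ᴴ * A * (Z c).1 = -A) :
    entrywiseIntegral μ (fun U => (block U.1 i k)ᴴ * block U.1 j c) = 0 := by
  have hinv := hμ.entrywiseIntegral_conjTranspose_block_mul_block hZ i j k c
  simp only [hsign, entrywiseIntegral_neg] at hinv
  ext a b
  exact neg_eq_self.mp (congr_fun₂ hinv a b)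

theorem entrywiseIntegral_conjTranspose_block_mul_block_eq_zero_of_ne (hμ : IsNice o μ)
    (i j : ι) {k c : ι} (hck : c ≠ k) :
    entrywiseIntegral μ (fun U => (block U.1 i k)ᴴ * block U.1 j c) = 0 := by
  rcases ne_or_eq c o with hco | rfl
  · refine hμ.entrywiseIntegral_conjTranspose_block_mul_block_eq_zero_of_sign
      (Z := Pi.mulSingle c (-1)) (Pi.mulSingle_eq_of_ne hco.symm _) i j fun A => ?_
    simp [Pi.mulSingle_eq_of_ne hck.symm, Unitary.coe_neg]
  · refine hμ.entrywiseIntegral_conjTranspose_block_mul_block_eq_zero_of_sign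
      (Z := Pi.mulSingle k (-1)) (Pi.mulSingle_eq_of_ne hck _) i j fun A => ?_
    simp [Pi.mulSingle_eq_of_ne hck, Unitary.coe_neg]

theorem entrywiseIntegral_conjTranspose_block_mul_block_eq_smul_one (hμ : IsNice o μ)
    (i j : ι) {c : ι} (hc : c ≠ o) :
    entrywiseIntegral μ (fun U => (block U.1 i c)ᴴ * block U.1 j c) =
      ((entrywiseIntegral μ (fun U => (block U.1 i c)ᴴ * block U.1 j c)).trace / Fintype.card n) •
        (1 : Matrix n n 𝕜) := by
  refine entrywiseIntegral_eq_smul_one_of_conj_invariant fun W hW => ?_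
  have hinv := hμ.entrywiseIntegral_conjTranspose_block_mul_block
    (Z := Pi.mulSingle c ⟨W, hW⟩) (Pi.mulSingle_eq_of_ne hc.symm _) i j c c
  simpa only [Pi.mulSingle_eq_same] using hinv

end IsNice

theorem stmt_11_general {o : ι} {μ : Measure (unitaryGroup (n × ι) 𝕜)} (hμ : IsNice o μ) :
    (∀ i j k c : ι, c ≠ k →
      entrywiseIntegral μ (fun U => (block U.1 i k)ᴴ * block U.1 j c) = 0) ∧
    (∀ i j c : ι, c ≠ o →
      entrywiseIntegral μ (fun U => (block U.1 i c)ᴴ * block U.1 j c) =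
        ((entrywiseIntegral μ (fun U => (block U.1 i c)ᴴ * block U.1 j c)).trace /
          Fintype.card n) • (1 : Matrix n n 𝕜)) :=
  ⟨fun i j _ _ hck => hμ.entrywiseIntegral_conjTranspose_block_mul_block_eq_zero_of_ne i j hck,
    fun i j _ hc => hμ.entrywiseIntegral_conjTranspose_block_mul_block_eq_smul_one i j hc⟩

end Nice

/-- for a nice probability measure `μ` on `U((N+1)d)`,
`𝔼[U_{ik}* U_{ic}] = 0` for distinct nonzero `c, k`, and `𝔼[U_{ic}* U_{ic}] = Γ_{ic} I_d`
with `Γ_{ic} = (1/d) Tr[𝔼[U_{ic}* U_{ic}]]` for nonzero `c`. -/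
theorem stmt_11 {N d : ℕ} (hN : 1 ≤ N) (hd : 1 ≤ d)
    [MeasurableSpace (Matrix.unitaryGroup (Fin d × Fin (N + 1)) ℂ)]
    (μ : Measure (Matrix.unitaryGroup (Fin d × Fin (N + 1)) ℂ)) [IsProbabilityMeasure μ]
    (hnice : ∀ Z : Matrix.unitaryGroup (Fin d × Fin (N + 1)) ℂ,
      (∃ Zc : Fin (N + 1) → Matrix (Fin d) (Fin d) ℂ,
        Zc 0 = 1 ∧ (∀ c, Zc c ∈ Matrix.unitaryGroup (Fin d) ℂ) ∧
        (Z : Matrix (Fin d × Fin (N + 1)) (Fin d × Fin (N + 1)) ℂ)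
          = ∑ c, Zc c ⊗ₖ Matrix.single c c (1 : ℂ)) →
      Measure.map (fun U => U * Z) μ = μ) :
    (∀ i c k : Fin (N + 1), c ≠ 0 → k ≠ 0 → c ≠ k →
      expec μ (fun U =>
        (blk (U : Matrix (Fin d × Fin (N + 1)) (Fin d × Fin (N + 1)) ℂ) i k)ᴴ *
          blk (U : Matrix (Fin d × Fin (N + 1)) (Fin d × Fin (N + 1)) ℂ) i c) = 0) ∧
    (∀ i c : Fin (N + 1), c ≠ 0 →
      expec μ (fun U =>
        (blk (U : Matrix (Fin d × Fin (N + 1)) (Fin d × Fin (N + 1)) ℂ) i c)ᴴ *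
          blk (U : Matrix (Fin d × Fin (N + 1)) (Fin d × Fin (N + 1)) ℂ) i c)
        = ((Matrix.trace (expec μ (fun U =>
            (blk (U : Matrix (Fin d × Fin (N + 1)) (Fin d × Fin (N + 1)) ℂ) i c)ᴴ *
              blk (U : Matrix (Fin d × Fin (N + 1)) (Fin d × Fin (N + 1)) ℂ) i c))) / (d : ℂ))
          • 1) := by
  obtain ⟨hoff, hdiag⟩ := stmt_11_general (IsNice.of_map_mul_sum_kronecker_single hnice)
  exact ⟨fun i c k _ _ hck => hoff i i k c hck,
    fun i c hc => by simpa only [Fintype.card_fin] using! hdiag i i c hc⟩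
end

section
/- Let A = (A_1, …, A_N) and B = (B_1, …, B_N) be N-outcome POVMs on ℂ^d. Define the uniform-noise incompatibility robustness α*_u as the supremum of all α ∈ [0,1] such that there exist positive semidefinite matrices C_{ij} ∈ M_d(ℂ) (i, j ∈ {1, …, N}) with Σ_{j=1}^{N} C_{ij} = α A_i + (1−α) I_d/N for all i and Σ_{i=1}^{N} C_{ij} = α B_j + (1−α) I_d/N for all j. Then α*_u equals the infimum, over Hermitian matrices X_1, …, X_N, Y_1, …, Y_N ∈ M_d(ℂ) satisfying X_i + Y_j ≥ 0 for all i, j and 1 + Σ_{i=1}^{N} Tr[X_i A_i] + Σ_{j=1}^{N} Tr[Y_j B_j] ≥ Σ_{i=1}^{N} Tr[X_i]/N + Σ_{j=1}^{N} Tr[Y_j]/N, of the quantity 1 + Σ_{i=1}^{N} Tr[X_i A_i] + Σ_{j=1}^{N} Tr[Y_j B_j]. -/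
open Matrix
open scoped ComplexOrder

/-!
Membership of `α p + (1 - α) q` in a closed convex cone `K`, with `q ∈ K`, is a conic feasibility
problem in `α`: if it fails, then the Farkas lemma gives a functional that is nonnegative on `K`
and negative at the mixture, and such functionals are exactly what the dual program ranges over.
Joint measurability is the case where `K` consists of the marginals of positive arrays. This cone is
closed because every entry of a positive array is dominated by a marginal, hence bounded in norm
by it. Under the trace pairing its dual cone consists of the pairs of Hermitian families with
`X i + Y j ≥ 0`, because the positive semidefinite cone is self-dual.
-/

section ConicDuality

variable {E : Type*} [AddCommGroup E] [Module ℝ E] [TopologicalSpace E]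

/-- The weights `α ∈ [0, 1]` for which the mixture `α p + (1 - α) q` of a point `p` with the noise
`q` lies in the cone `K`; the supremum of this set is the robustness of `p` against `q`. -/
def robustnessWeights (K : ProperCone ℝ E) (p q : E) : Set ℝ :=
  {α | 0 ≤ α ∧ α ≤ 1 ∧ α • p + (1 - α) • q ∈ K}

/-- The values of the conic program dual to `sSup (robustnessWeights K p q)`; its variable is a
functional `f` in the dual cone of `K`. -/
def robustnessDualValues (K : ProperCone ℝ E) (p q : E) : Set ℝ :=
  {r | ∃ f : StrongDual ℝ E, (∀ x ∈ K, 0 ≤ f x) ∧ f q ≤ 1 + f p ∧ r = 1 + f p}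

variable {K : ProperCone ℝ E} {p q : E}

lemma zero_mem_robustnessWeights (hq : q ∈ K) : 0 ∈ robustnessWeights K p q := by
  simpa [robustnessWeights] using hq

lemma one_mem_robustnessDualValues : 1 ∈ robustnessDualValues K p q :=
  ⟨0, by simp, by simp, by simp⟩

lemma le_of_mem_robustnessWeights_of_mem_robustnessDualValues {α r : ℝ}
    (hα : α ∈ robustnessWeights K p q) (hr : r ∈ robustnessDualValues K p q) : α ≤ r := by
  obtain ⟨-, hα₁, hmem⟩ := hα
  obtain ⟨f, hfK, hfq, rfl⟩ := hr
  have hmix : 0 ≤ α * f p + (1 - α) * f q := by simpa using hfK _ hmem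
  linarith [mul_le_mul_of_nonneg_left hfq (sub_nonneg.2 hα₁)]

/- A functional separating the mixture from `K` becomes feasible for the dual program once it is
rescaled so that `f q - f p = 1`, that is, so that its constraint is tight. -/
lemma exists_mem_robustnessDualValues_le [IsTopologicalAddGroup E] [ContinuousSMul ℝ E]
    [LocallyConvexSpace ℝ E] (hq : q ∈ K) {α : ℝ} (hα₀ : 0 < α) (hα₁ : α ≤ 1)
    (hα : α ∉ robustnessWeights K p q) : ∃ r ∈ robustnessDualValues K p q, r ≤ α := by
  obtain ⟨f, hfK, hf⟩ := K.hyperplane_separation_point fun h ↦ hα ⟨hα₀.le, hα₁, h⟩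
  have hmix : α * f p + (1 - α) * f q < 0 := by simpa using hf
  have hfq : 0 ≤ f q := hfK q hq
  have hfp : f p < 0 := by
    by_contra! hfp
    linarith [mul_nonneg hα₀.le hfp, mul_nonneg (sub_nonneg.2 hα₁) hfq]
  have hgap : 0 < f q - f p := by linarith
  have hval : 1 + (f q - f p)⁻¹ * f p = (f q - f p)⁻¹ * f q := by
    field_simp
    ring
  refine ⟨1 + (f q - f p)⁻¹ * f p, ⟨(f q - f p)⁻¹ • f, fun x hx ↦ ?_, ?_, rfl⟩, ?_⟩
  · exact mul_nonneg (inv_nonneg.2 hgap.le) (hfK x hx)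
  · exact hval.ge
  · rw [hval, inv_mul_le_iff₀ hgap]
    linarith

theorem sSup_robustnessWeights_eq_sInf_robustnessDualValues [IsTopologicalAddGroup E]
    [ContinuousSMul ℝ E] [LocallyConvexSpace ℝ E] (hq : q ∈ K) :
    sSup (robustnessWeights K p q) = sInf (robustnessDualValues K p q) := by
  have hweak : ∀ α ∈ robustnessWeights K p q, ∀ r ∈ robustnessDualValues K p q, α ≤ r :=
    fun _ hα _ hr ↦ le_of_mem_robustnessWeights_of_mem_robustnessDualValues hα hr
  have hzero := zero_mem_robustnessWeights (p := p) hq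
  have hone := one_mem_robustnessDualValues (K := K) (p := p) (q := q)
  have hbelow : BddBelow (robustnessDualValues K p q) := ⟨0, hweak 0 hzero⟩
  have habove : BddAbove (robustnessWeights K p q) := ⟨1, fun α hα ↦ hα.2.1⟩
  refine le_antisymm
    (csSup_le ⟨0, hzero⟩ fun α hα ↦ le_csInf ⟨1, hone⟩ (hweak α hα))
    (le_of_forall_gt_imp_ge_of_dense fun α hα ↦ ?_)
  rcases le_total 1 α with hα₁ | hα₁
  · exact (csInf_le hbelow hone).trans hα₁
  · have hα₀ : 0 < α := (le_csSup habove hzero).trans_lt hα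
    obtain ⟨r, hr, hrα⟩ :=
      exists_mem_robustnessDualValues_le hq hα₀ hα₁ fun h ↦ hα.not_ge (le_csSup habove h)
    exact (csInf_le hbelow hr).trans hrα

end ConicDuality

lemma isClosed_image_of_norm_le {E F : Type*} [NormedAddCommGroup E] [ProperSpace E]
    [NormedAddCommGroup F] {s : Set E} (hs : IsClosed s) {f : E → F} (hf : Continuous f)
    (hle : ∀ x ∈ s, ‖x‖ ≤ ‖f x‖) : IsClosed (f '' s) := by
  refine isClosed_of_closure_subset fun y hy ↦ ?_
  obtain ⟨z, hzs, hzy⟩ := mem_closure_iff_seq_limit.1 hy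
  choose x hxs hxz using hzs
  obtain ⟨R, hR⟩ := hzy.norm.isBoundedUnder_le.bddAbove_range
  have hxR : ∀ k, x k ∈ Metric.closedBall 0 R ∩ s := fun k ↦
    ⟨mem_closedBall_zero_iff.2 <| (hle _ (hxs k)).trans <| hxz k ▸ hR ⟨k, rfl⟩, hxs k⟩
  obtain ⟨a, ha, φ, hφ, hxa⟩ := ((isCompact_closedBall 0 R).inter_right hs).tendsto_subseq hxR
  refine ⟨a, ha.2, tendsto_nhds_unique ((hf.tendsto a).comp hxa) ?_⟩
  simpa [Function.comp_def, hxz] using hzy.comp hφ.tendsto_atTop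

section MarginalCone

variable {ι κ : Type*} [Fintype ι] [Fintype κ]

/-- The pair of marginals `(∑ j, C i j)_i` and `(∑ i, C i j)_j` of an array `C`. -/
def marginals (ι κ E : Type*) [Fintype ι] [Fintype κ] [AddCommGroup E] [Module ℝ E]
    [TopologicalSpace E] [IsTopologicalAddGroup E] :
    (ι → κ → E) →L[ℝ] (ι → E) × (κ → E) where
  toFun C := (fun i ↦ ∑ j, C i j, fun j ↦ ∑ i, C i j)
  map_add' C D := by ext <;> simp [Finset.sum_add_distrib]
  map_smul' c C := by ext <;> simp [Finset.smul_sum]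
  cont := by fun_prop

lemma marginals_apply {E : Type*} [AddCommGroup E] [Module ℝ E] [TopologicalSpace E]
    [IsTopologicalAddGroup E] (C : ι → κ → E) :
    marginals ι κ E C = (fun i ↦ ∑ j, C i j, fun j ↦ ∑ i, C i j) := rfl

variable {𝒜 : Type*} [NonUnitalCStarAlgebra 𝒜] [PartialOrder 𝒜] [StarOrderedRing 𝒜]

lemma norm_le_norm_marginals {C : ι → κ → 𝒜} (hC : 0 ≤ C) : ‖C‖ ≤ ‖marginals ι κ 𝒜 C‖ := by
  refine (pi_norm_le_iff_of_nonneg (norm_nonneg _)).2 fun i ↦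
    (pi_norm_le_iff_of_nonneg (norm_nonneg _)).2 fun j ↦ ?_
  calc ‖C i j‖ ≤ ‖∑ j, C i j‖ := CStarAlgebra.norm_le_norm_of_nonneg_of_le (hC i j)
        (Finset.single_le_sum (fun j _ ↦ hC i j) (Finset.mem_univ j))
    _ ≤ ‖(marginals ι κ 𝒜 C).1‖ := norm_le_pi_norm (marginals ι κ 𝒜 C).1 i
    _ ≤ ‖marginals ι κ 𝒜 C‖ := norm_fst_le _

variable (ι κ 𝒜) in
/-- The cone of pairs of families that are the marginals of a positive array. The marginals of an
array bound the array in norm, so this cone is closed. -/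
noncomputable def marginalCone [ProperSpace 𝒜] : ProperCone ℝ ((ι → 𝒜) × (κ → 𝒜)) where
  toSubmodule := (PointedCone.positive ℝ (ι → κ → 𝒜)).map (marginals ι κ 𝒜).toLinearMap
  isClosed' := isClosed_image_of_norm_le isClosed_Ici (marginals ι κ 𝒜).continuous
    fun _ ↦ norm_le_norm_marginals

lemma mem_marginalCone [ProperSpace 𝒜] {R : (ι → 𝒜) × (κ → 𝒜)} :
    R ∈ marginalCone ι κ 𝒜 ↔ ∃ C, 0 ≤ C ∧ marginals ι κ 𝒜 C = R := .rfl

end MarginalCone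

section TraceDuality

variable {n 𝕜 : Type*} [Fintype n] [RCLike 𝕜]

lemma trace_mul_nonneg_of_posSemidef {M Z : Matrix n n 𝕜} (hM : M.PosSemidef)
    (hZ : Z.PosSemidef) : 0 ≤ (M * Z).trace := by
  obtain ⟨m, v, rfl⟩ := posSemidef_iff_eq_sum_vecMulVec.1 hZ
  rw [Finset.mul_sum, trace_sum]
  refine Finset.sum_nonneg fun i _ ↦ ?_
  rw [mul_vecMulVec, trace_vecMulVec, dotProduct_comm]
  exact hM.dotProduct_mulVec_nonneg (v i)

lemma posSemidef_iff_forall_re_trace_mul_nonneg {M : Matrix n n 𝕜} (hM : M.IsHermitian) :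
    M.PosSemidef ↔ ∀ Z : Matrix n n 𝕜, Z.PosSemidef → 0 ≤ RCLike.re (M * Z).trace := by
  refine ⟨fun hMpos Z hZ ↦ (RCLike.nonneg_iff.1 (trace_mul_nonneg_of_posSemidef hMpos hZ)).1,
    fun h ↦ .of_dotProduct_mulVec_nonneg hM fun v ↦ RCLike.nonneg_iff.2
      ⟨?_, hM.im_star_dotProduct_mulVec_self v⟩⟩
  simpa only [mul_vecMulVec, trace_vecMulVec, dotProduct_comm] using
    h _ (posSemidef_vecMulVec_self_star v)

lemma exists_forall_eq_trace_mul {R : Type*} [CommSemiring R]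
    (g : Module.Dual R (Matrix n n R)) : ∃ X : Matrix n n R, ∀ Z, g Z = (X * Z).trace := by
  classical
  let X : Matrix n n R := of fun j i ↦ g (single i j 1)
  suffices g = traceLinearMap n R R ∘ₗ LinearMap.mulLeft R X from ⟨X, LinearMap.congr_fun this⟩
  refine ext_linearMap R fun i j ↦ LinearMap.ext_ring ?_
  simp [X, trace_mul_single]

lemma re_trace_conjTranspose_mul {X Z : Matrix n n 𝕜} (hZ : Z.IsHermitian) :
    RCLike.re (Xᴴ * Z).trace = RCLike.re (X * Z).trace := by
  rw [← hZ.eq, ← conjTranspose_mul, trace_conjTranspose, hZ.eq, trace_mul_comm]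
  simp

/- Complexify `g`, represent it by a matrix through the trace pairing, and take the Hermitian
part. -/
lemma exists_isHermitian_forall_eq_re_trace_mul (g : Module.Dual ℝ (Matrix n n 𝕜)) :
    ∃ X : Matrix n n 𝕜, X.IsHermitian ∧
      ∀ Z : Matrix n n 𝕜, Z.IsHermitian → g Z = RCLike.re (X * Z).trace := by
  classical
  obtain ⟨X, hX⟩ := exists_forall_eq_trace_mul (g.extendRCLike (𝕜 := 𝕜))
  have hgX (Z : Matrix n n 𝕜) : g Z = RCLike.re (X * Z).trace := by
    rw [← hX, Module.Dual.re_extendRCLike_apply]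
  refine ⟨(2⁻¹ : ℝ) • (X + Xᴴ), (isHermitian_add_transpose_self X).smul (.all _), fun Z hZ ↦ ?_⟩
  rw [smul_mul, trace_smul, RCLike.smul_re, add_mul, trace_add, map_add,
    re_trace_conjTranspose_mul hZ, hgX]
  ring

end TraceDuality

section Compatibility

variable {ι κ n : Type*} [Fintype ι] [Fintype κ]

/-- Two families of matrices are compatible if they are the marginals of a positive semidefinite
array. For POVMs this is joint measurability: the array then sums to the identity. -/
def IsCompatible (P : ι → Matrix n n ℂ) (Q : κ → Matrix n n ℂ) : Prop :=
  ∃ C : ι → κ → Matrix n n ℂ, (∀ i j, (C i j).PosSemidef) ∧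
    (∀ i, ∑ j, C i j = P i) ∧ ∀ j, ∑ i, C i j = Q j

lemma IsCompatible.isHermitian_left {P : ι → Matrix n n ℂ} {Q : κ → Matrix n n ℂ}
    (h : IsCompatible P Q) (i : ι) : (P i).IsHermitian := by
  obtain ⟨C, hC, hP, -⟩ := h
  exact hP i ▸ (posSemidef_sum _ fun j _ ↦ hC i j).isHermitian

lemma IsCompatible.isHermitian_right {P : ι → Matrix n n ℂ} {Q : κ → Matrix n n ℂ}
    (h : IsCompatible P Q) (j : κ) : (Q j).IsHermitian := by
  obtain ⟨C, hC, -, hQ⟩ := h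
  exact hQ j ▸ (posSemidef_sum _ fun i _ ↦ hC i j).isHermitian

lemma isCompatible_smul_smul {D : Matrix n n ℂ} (hD : D.PosSemidef) {a : ι → ℝ} {b : κ → ℝ}
    (ha : 0 ≤ a) (hb : 0 ≤ b) (ha_sum : ∑ i, a i = 1) (hb_sum : ∑ j, b j = 1) :
    IsCompatible (fun i ↦ a i • D) (fun j ↦ b j • D) := by
  refine ⟨fun i j ↦ (a i * b j) • D, fun i j ↦ hD.smul (mul_nonneg (ha i) (hb j)), fun i ↦ ?_,
    fun j ↦ ?_⟩
  · rw [← Finset.sum_smul, ← Finset.mul_sum, hb_sum, mul_one]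
  · rw [← Finset.sum_smul, ← Finset.sum_mul, ha_sum, one_mul]

variable [Fintype n]

/-- The functional `P ↦ ∑ i, Re Tr[X i * P i]` on families of matrices. -/
noncomputable def tracePairing (X : ι → Matrix n n ℂ) : StrongDual ℝ (ι → Matrix n n ℂ) where
  toFun P := ∑ i, ((X i * P i).trace).re
  map_add' P Q := by simp [mul_add, Finset.sum_add_distrib]
  map_smul' c P := by simp [Finset.mul_sum]
  cont := by fun_prop

lemma tracePairing_apply (X P : ι → Matrix n n ℂ) :
    tracePairing X P = ∑ i, ((X i * P i).trace).re := rfl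

lemma exists_isHermitian_forall_eq_tracePairing (g : StrongDual ℝ (ι → Matrix n n ℂ)) :
    ∃ X : ι → Matrix n n ℂ, (∀ i, (X i).IsHermitian) ∧
      ∀ P : ι → Matrix n n ℂ, (∀ i, (P i).IsHermitian) → g P = tracePairing X P := by
  classical
  choose X hX hgX using fun i ↦ exists_isHermitian_forall_eq_re_trace_mul
    (g.toLinearMap ∘ₗ LinearMap.single ℝ (fun _ : ι ↦ Matrix n n ℂ) i)
  refine ⟨X, hX, fun P hP ↦ ?_⟩
  rw [← Finset.univ_sum_single P, map_sum, Finset.univ_sum_single]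
  exact Finset.sum_congr rfl fun i _ ↦ hgX i (P i) (hP i)

lemma coprod_tracePairing_marginals (X : ι → Matrix n n ℂ) (Y : κ → Matrix n n ℂ)
    (C : ι → κ → Matrix n n ℂ) :
    (tracePairing X).coprod (tracePairing Y) (marginals ι κ _ C) =
      ∑ i, ∑ j, (((X i + Y j) * C i j).trace).re := by
  have hY : ∑ j, ∑ i, ((Y j * C i j).trace).re = ∑ i, ∑ j, ((Y j * C i j).trace).re :=
    Finset.sum_comm
  simp [marginals_apply, tracePairing_apply, Finset.mul_sum, trace_sum, add_mul,
    Finset.sum_add_distrib, hY]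

open scoped MatrixOrder Matrix.Norms.L2Operator

section DualCone

variable [DecidableEq n]

lemma mem_marginalCone_iff_isCompatible {P : ι → Matrix n n ℂ} {Q : κ → Matrix n n ℂ} :
    (P, Q) ∈ marginalCone ι κ (Matrix n n ℂ) ↔ IsCompatible P Q := by
  simp only [mem_marginalCone, marginals_apply, IsCompatible, Pi.le_def, Pi.zero_apply,
    nonneg_iff_posSemidef, Prod.mk.injEq, funext_iff]

lemma forall_mem_marginalCone_tracePairing_nonneg_iff {X : ι → Matrix n n ℂ}
    {Y : κ → Matrix n n ℂ} (hX : ∀ i, (X i).IsHermitian) (hY : ∀ j, (Y j).IsHermitian) :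
    (∀ R ∈ marginalCone ι κ (Matrix n n ℂ), 0 ≤ (tracePairing X).coprod (tracePairing Y) R) ↔
      ∀ i j, (X i + Y j).PosSemidef := by
  classical
  constructor
  · refine fun h i j ↦ (posSemidef_iff_forall_re_trace_mul_nonneg ((hX i).add (hY j))).2
      fun Z hZ ↦ ?_
    have hsingle : 0 ≤ (Pi.single i (Pi.single j Z) : ι → κ → Matrix n n ℂ) :=
      Pi.single_nonneg.2 (Pi.single_nonneg.2 (nonneg_iff_posSemidef.2 hZ))
    have hpair := h _ (mem_marginalCone.2 ⟨_, hsingle, rfl⟩)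
    rwa [coprod_tracePairing_marginals, Fintype.sum_eq_single i (by simp +contextual),
      Fintype.sum_eq_single j (by simp +contextual), Pi.single_eq_same, Pi.single_eq_same] at hpair
  · intro hXY R hR
    obtain ⟨C, hC, rfl⟩ := mem_marginalCone.1 hR
    rw [coprod_tracePairing_marginals]
    refine Finset.sum_nonneg fun i _ ↦ Finset.sum_nonneg fun j _ ↦ ?_
    exact (posSemidef_iff_forall_re_trace_mul_nonneg ((hX i).add (hY j))).1 (hXY i j) _
      (nonneg_iff_posSemidef.1 (hC i j))

lemma robustnessWeights_marginalCone (A E : ι → Matrix n n ℂ) (B F : κ → Matrix n n ℂ) :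
    robustnessWeights (marginalCone ι κ (Matrix n n ℂ)) (A, B) (E, F) =
      {α | 0 ≤ α ∧ α ≤ 1 ∧
        IsCompatible (fun i ↦ α • A i + (1 - α) • E i) (fun j ↦ α • B j + (1 - α) • F j)} := by
  simp only [← mem_marginalCone_iff_isCompatible]
  rfl

lemma robustnessDualValues_marginalCone {A E : ι → Matrix n n ℂ} {B F : κ → Matrix n n ℂ}
    (hA : ∀ i, (A i).IsHermitian) (hB : ∀ j, (B j).IsHermitian) (hEF : IsCompatible E F) :
    robustnessDualValues (marginalCone ι κ (Matrix n n ℂ)) (A, B) (E, F) =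
      {r | ∃ X : ι → Matrix n n ℂ, ∃ Y : κ → Matrix n n ℂ,
        (∀ i, (X i).IsHermitian) ∧ (∀ j, (Y j).IsHermitian) ∧ (∀ i j, (X i + Y j).PosSemidef) ∧
        1 + tracePairing X A + tracePairing Y B ≥ tracePairing X E + tracePairing Y F ∧
        r = 1 + tracePairing X A + tracePairing Y B} := by
  ext r
  constructor
  · rintro ⟨f, hfK, hfq, rfl⟩
    obtain ⟨X, hX, hfX⟩ := exists_isHermitian_forall_eq_tracePairing (f ∘L .inl ℝ _ _)
    obtain ⟨Y, hY, hfY⟩ := exists_isHermitian_forall_eq_tracePairing (f ∘L .inr ℝ _ _)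
    have hf (P : ι → Matrix n n ℂ) (Q : κ → Matrix n n ℂ) (hP : ∀ i, (P i).IsHermitian)
        (hQ : ∀ j, (Q j).IsHermitian) : f (P, Q) = tracePairing X P + tracePairing Y Q := by
      rw [← hfX P hP, ← hfY Q hQ]
      simp [← map_add]
    rw [hf A B hA hB] at hfq ⊢
    rw [hf E F hEF.isHermitian_left hEF.isHermitian_right, ← add_assoc] at hfq
    refine ⟨X, Y, hX, hY, (forall_mem_marginalCone_tracePairing_nonneg_iff hX hY).1 ?_, hfq,
      (add_assoc _ _ _).symm⟩
    rintro ⟨P, Q⟩ hPQ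
    have hcompat := mem_marginalCone_iff_isCompatible.1 hPQ
    simpa [← hf P Q hcompat.isHermitian_left hcompat.isHermitian_right] using hfK _ hPQ
  · rintro ⟨X, Y, hX, hY, hXY, hge, rfl⟩
    refine ⟨(tracePairing X).coprod (tracePairing Y),
      (forall_mem_marginalCone_tracePairing_nonneg_iff hX hY).2 hXY, ?_, ?_⟩
    · simpa [add_assoc] using hge
    · simp [add_assoc]

end DualCone

theorem stmt_15_general {A E : ι → Matrix n n ℂ} {B F : κ → Matrix n n ℂ}
    (hA : ∀ i, (A i).IsHermitian) (hB : ∀ j, (B j).IsHermitian) (hEF : IsCompatible E F) :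
    sSup {α : ℝ | 0 ≤ α ∧ α ≤ 1 ∧
        IsCompatible (fun i ↦ α • A i + (1 - α) • E i) (fun j ↦ α • B j + (1 - α) • F j)} =
      sInf {r : ℝ | ∃ X : ι → Matrix n n ℂ, ∃ Y : κ → Matrix n n ℂ,
        (∀ i, (X i).IsHermitian) ∧ (∀ j, (Y j).IsHermitian) ∧ (∀ i j, (X i + Y j).PosSemidef) ∧
        1 + ∑ i, ((X i * A i).trace).re + ∑ j, ((Y j * B j).trace).re ≥
          ∑ i, ((X i * E i).trace).re + ∑ j, ((Y j * F j).trace).re ∧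
        r = 1 + ∑ i, ((X i * A i).trace).re + ∑ j, ((Y j * B j).trace).re} := by
  classical
  rw [← robustnessWeights_marginalCone,
    sSup_robustnessWeights_eq_sInf_robustnessDualValues (mem_marginalCone_iff_isCompatible.2 hEF),
    robustnessDualValues_marginalCone hA hB hEF]
  simp only [tracePairing_apply]

end Compatibility

section UniformNoise

lemma isCompatible_inv_card_smul_one {ι κ n : Type*} [Fintype ι] [Fintype κ] [Nonempty ι]
    [Nonempty κ] [DecidableEq n] :
    IsCompatible (fun _ : ι ↦ (Fintype.card ι : ℝ)⁻¹ • (1 : Matrix n n ℂ))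
      (fun _ : κ ↦ (Fintype.card κ : ℝ)⁻¹ • (1 : Matrix n n ℂ)) :=
  isCompatible_smul_smul .one (fun _ ↦ by positivity) (fun _ ↦ by positivity) (by simp) (by simp)

lemma ofReal_div_natCast_smul {V : Type*} [AddCommGroup V] [Module ℂ V] (a : ℝ) (N : ℕ) (x : V) :
    ((a : ℂ) / (N : ℂ)) • x = a • (N : ℝ)⁻¹ • x := by
  rw [smul_smul, ← Complex.coe_smul, div_eq_mul_inv]
  push_cast
  rfl

lemma re_trace_mul_inv_smul_one {n : Type*} [Fintype n] [DecidableEq n] (X : Matrix n n ℂ) (a : ℝ) :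
    ((X * a⁻¹ • (1 : Matrix n n ℂ)).trace).re = (X.trace).re / a := by
  rw [mul_smul_comm, mul_one, trace_smul, Complex.smul_re, smul_eq_mul, div_eq_inv_mul]

end UniformNoise

/-- SDP duality for the incompatibility robustness with uniform noise. -/
theorem stmt_15 {N d : ℕ} (hN : 1 ≤ N) (hd : 1 ≤ d)
    (A B : Fin N → Matrix (Fin d) (Fin d) ℂ)
    (hA : ∀ i, (A i).PosSemidef) (hAsum : ∑ i, A i = 1)
    (hB : ∀ j, (B j).PosSemidef) (hBsum : ∑ j, B j = 1) :
    sSup {α : ℝ | 0 ≤ α ∧ α ≤ 1 ∧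
        ∃ C : Fin N → Fin N → Matrix (Fin d) (Fin d) ℂ,
          (∀ i j, (C i j).PosSemidef) ∧
          (∀ i, ∑ j, C i j = (α : ℂ) • A i + (((1 - α : ℝ) : ℂ) / (N : ℂ)) • 1) ∧
          (∀ j, ∑ i, C i j = (α : ℂ) • B j + (((1 - α : ℝ) : ℂ) / (N : ℂ)) • 1)}
      = sInf {r : ℝ |
          ∃ X Y : Fin N → Matrix (Fin d) (Fin d) ℂ,
            (∀ i, (X i).IsHermitian) ∧ (∀ j, (Y j).IsHermitian) ∧
            (∀ i j, (X i + Y j).PosSemidef) ∧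
            (1 + ∑ i, ((X i * A i).trace).re + ∑ j, ((Y j * B j).trace).re ≥
              ∑ i, ((X i).trace).re / (N : ℝ) + ∑ j, ((Y j).trace).re / (N : ℝ)) ∧
            r = 1 + ∑ i, ((X i * A i).trace).re + ∑ j, ((Y j * B j).trace).re} := by
  have : Nonempty (Fin N) := Fin.pos_iff_nonempty.1 hN
  simpa only [IsCompatible, Fintype.card_fin, Complex.coe_smul, ofReal_div_natCast_smul,
    re_trace_mul_inv_smul_one] using stmt_15_general (fun i ↦ (hA i).isHermitian)
      (fun j ↦ (hB j).isHermitian) isCompatible_inv_card_smul_one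
end
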